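/- An element f ∈ O_U ∩ O_V (a global function on Z_k^{(n)}) is a unit of the ring A if and only if its coefficient of the monomial z⁰u⁰ is nonzero; moreover, in that case its inverse again lies in O_U ∩ O_V. (This is the characterization, via the map det₀ of restriction to the zero section, of invertible global functions on Z_k^{(n)}.) -/

import Mathlib

set_option synthInstance.maxHeartbeats 1000000
set_option maxHeartbeats 1000000

noncomputable section

/-- The ring of Laurent polynomials `ℂ[z,z⁻¹]`. -/
abbrev Lz : Type := LaurentPolynomial ℂ

/-- The ring `P = ℂ[z,z⁻¹][[u]]` of formal power series in `u` with Laurent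
polynomial coefficients. -/
abbrev Pz : Type := PowerSeries Lz

/-- The monomial `z^l u^i` as an element of `P`. -/
def mon (l : ℤ) (i : ℕ) : Pz := PowerSeries.monomial (R := Lz) i (LaurentPolynomial.T l)

/-- The coefficient of `z^l` in a Laurent polynomial, as a `ℂ`-linear map. -/
def coeffL (l : ℤ) : Lz →ₗ[ℂ] ℂ :=
  (Finsupp.lapply l).comp (AddMonoidAlgebra.coeffLinearEquiv ℂ).toLinearMap

/-- The coefficient of `z^l u^i` in an element of `P`, as a `ℂ`-linear map. -/
def coeffP (l : ℤ) (i : ℕ) : Pz →ₗ[ℂ] ℂ :=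
  (coeffL l).comp ((PowerSeries.coeff (R := Lz) i).restrictScalars ℂ)

/-- The ideal `(u^{n+1})` of `P`. -/
def In (n : ℕ) : Ideal Pz := Ideal.span {(PowerSeries.X : Pz) ^ (n + 1)}

/-- The ring `A = ℂ[z,z⁻¹][u]/(u^{n+1})`, the coordinate ring of the overlap of the two
standard charts of the `n`-th infinitesimal neighborhood `Z_k^{(n)}`. -/
abbrev Aq (n : ℕ) : Type := Pz ⧸ In n

/-- The quotient map `P → A`. -/
def toA (n : ℕ) : Pz →+* Aq n := Ideal.Quotient.mk (In n)

/-- The monomial `z^l u^i` as an element of `A`. -/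
def monA (n : ℕ) (l : ℤ) (i : ℕ) : Aq n := toA n (mon l i)

/-- `O_U ⊆ A`: the `ℂ`-span of the monomials `z^l u^i` with `l ≥ 0`, `0 ≤ i ≤ n`. -/
def OU (n : ℕ) : Submodule ℂ (Aq n) :=
  Submodule.span ℂ {x | ∃ l : ℤ, ∃ i : ℕ, 0 ≤ l ∧ i ≤ n ∧ x = monA n l i}

/-- `O_V ⊆ A`: the `ℂ`-span of the monomials `z^l u^i` with `l ≤ k·i`, `0 ≤ i ≤ n`. -/
def OV (k n : ℕ) : Submodule ℂ (Aq n) :=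
  Submodule.span ℂ {x | ∃ l : ℤ, ∃ i : ℕ, l ≤ k * i ∧ i ≤ n ∧ x = monA n l i}

/-- The submodule `a·S` obtained from a submodule `S` by multiplying by a fixed element `a`. -/
def msmul {n : ℕ} (a : Aq n) (S : Submodule ℂ (Aq n)) : Submodule ℂ (Aq n) :=
  Submodule.map (LinearMap.mulLeft ℂ a) S

/-- The coefficient of the monomial `z^0 u^0` in an element of `A` (well defined since the
ideal `(u^{n+1})` has vanishing `u^0`-coefficient). -/
def c00 (n : ℕ) : Aq n →ₗ[ℂ] ℂ := by
  refine (Submodule.liftQ ((In n).restrictScalars ℂ) (coeffP 0 0) ?_).comp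
    (Submodule.Quotient.restrictScalarsEquiv ℂ ((In n) : Submodule Pz Pz)).symm.toLinearMap
  intro x hx
  simp only [Submodule.restrictScalars_mem, In, Ideal.mem_span_singleton] at hx
  obtain ⟨g, rfl⟩ := hx
  simp only [LinearMap.mem_ker, coeffP, coeffL, LinearMap.comp_apply,
    LinearMap.restrictScalars_apply]
  have h : (PowerSeries.coeff (R := Lz) 0) ((PowerSeries.X : Pz) ^ (n + 1) * g) = 0 := by
    rw [PowerSeries.coeff_zero_eq_constantCoeff, map_mul, map_pow,
      PowerSeries.constantCoeff_X, zero_pow (Nat.succ_ne_zero n), zero_mul]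
  rw [h]
  simp

/-- Restriction to the zero section. -/
def rho (n : ℕ) : Aq n →+* Lz :=
  Ideal.Quotient.lift (In n) (PowerSeries.constantCoeff (R := Lz)) (by
    intro x hx
    simp only [In, Ideal.mem_span_singleton] at hx
    obtain ⟨g, rfl⟩ := hx
    rw [map_mul, map_pow, PowerSeries.constantCoeff_X, zero_pow (Nat.succ_ne_zero n), zero_mul])

lemma rho_toA (n : ℕ) (p : Pz) : rho n (toA n p) = PowerSeries.constantCoeff (R := Lz) p := rfl

lemma c00_toA (n : ℕ) (p : Pz) : c00 n (toA n p) = coeffL 0 (PowerSeries.constantCoeff (R := Lz) p) := by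
  rw [← PowerSeries.coeff_zero_eq_constantCoeff_apply]
  rfl

lemma c00_eq (n : ℕ) (f : Aq n) : c00 n f = coeffL 0 (rho n f) := by
  obtain ⟨p, rfl⟩ := Ideal.Quotient.mk_surjective f
  exact c00_toA n p

lemma toA_smul (n : ℕ) (c : ℂ) (p : Pz) : toA n (c • p) = c • toA n p := rfl

lemma rho_smul (n : ℕ) (c : ℂ) (f : Aq n) : rho n (c • f) = c • rho n f := by
  obtain ⟨p, rfl⟩ := Ideal.Quotient.mk_surjective f
  change rho n (c • toA n p) = c • rho n (toA n p)
  rw [← toA_smul, rho_toA, rho_toA]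
  rw [← PowerSeries.coeff_zero_eq_constantCoeff_apply,
    ← PowerSeries.coeff_zero_eq_constantCoeff_apply]
  rfl

lemma coeffL_T (l m : ℤ) : coeffL l (LaurentPolynomial.T m) = if m = l then 1 else 0 := by
  change (Finsupp.single m (1 : ℂ)) l = _
  rw [Finsupp.single_apply]

lemma rho_monA (n : ℕ) (l : ℤ) (i : ℕ) :
    rho n (monA n l i) = if i = 0 then LaurentPolynomial.T l else 0 := by
  rw [monA, rho_toA, mon, ← PowerSeries.coeff_zero_eq_constantCoeff_apply,
    PowerSeries.coeff_monomial]
  simp [eq_comm]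

lemma mem_span_rho (n : ℕ) (S : Set (Aq n)) (l : ℤ)
    (h : ∀ x ∈ S, coeffL l (rho n x) = 0) (f : Aq n) (hf : f ∈ Submodule.span ℂ S) :
    coeffL l (rho n f) = 0 := by
  induction hf using Submodule.span_induction with
  | mem x hx => exact h x hx
  | zero => simp
  | add x y _ _ hx hy => rw [map_add, map_add, hx, hy, add_zero]
  | smul c x _ hx => rw [rho_smul, map_smul, hx, smul_zero]

lemma monA_mul (n : ℕ) (l m : ℤ) (i j : ℕ) :
    monA n l i * monA n m j = monA n (l + m) (i + j) := by
  rw [monA, monA, monA, ← map_mul, mon, mon, mon, PowerSeries.monomial_mul_monomial,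
    LaurentPolynomial.T_add]

lemma monA_zero (n : ℕ) (l : ℤ) (i : ℕ) (hi : n < i) : monA n l i = 0 := by
  rw [monA, toA, Ideal.Quotient.eq_zero_iff_mem, In, Ideal.mem_span_singleton,
    PowerSeries.X_pow_dvd_iff]
  intro m hm
  rw [mon, PowerSeries.coeff_monomial, if_neg (by omega)]

lemma monA_one (n : ℕ) : monA n 0 0 = 1 := by
  rw [monA, mon, LaurentPolynomial.T_zero, PowerSeries.monomial_zero_eq_C_apply, map_one, map_one]

lemma span_mul_mem (n : ℕ) (R : ℤ → ℕ → Prop)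
    (hR : ∀ l m i j, R l i → R m j → R (l + m) (i + j)) (f g : Aq n)
    (hf : f ∈ Submodule.span ℂ {x | ∃ l : ℤ, ∃ i : ℕ, R l i ∧ i ≤ n ∧ x = monA n l i})
    (hg : g ∈ Submodule.span ℂ {x | ∃ l : ℤ, ∃ i : ℕ, R l i ∧ i ≤ n ∧ x = monA n l i}) :
    f * g ∈ Submodule.span ℂ {x | ∃ l : ℤ, ∃ i : ℕ, R l i ∧ i ≤ n ∧ x = monA n l i} := by
  induction hf, hg using Submodule.span_induction₂ with
  | mem_mem x y hx hy =>
    obtain ⟨l, i, h1, h2, rfl⟩ := hx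
    obtain ⟨m, j, h3, h4, rfl⟩ := hy
    rw [monA_mul]
    by_cases h : i + j ≤ n
    · exact Submodule.subset_span ⟨_, _, hR _ _ _ _ h1 h3, h, rfl⟩
    · rw [monA_zero n _ _ (by omega)]
      exact Submodule.zero_mem _
  | zero_left y _ => rw [zero_mul]; exact Submodule.zero_mem _
  | zero_right y _ => rw [mul_zero]; exact Submodule.zero_mem _
  | add_left x y z _ _ _ h1 h2 => rw [add_mul]; exact Submodule.add_mem _ h1 h2
  | add_right x y z _ _ _ h1 h2 => rw [mul_add]; exact Submodule.add_mem _ h1 h2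
  | smul_left c x y _ _ h => rw [smul_mul_assoc]; exact Submodule.smul_mem _ _ h
  | smul_right c x y _ _ h => rw [mul_smul_comm]; exact Submodule.smul_mem _ _ h

lemma one_mem_B (k n : ℕ) : (1 : Aq n) ∈ OU n ⊓ OV k n := by
  rw [← monA_one]
  exact ⟨Submodule.subset_span ⟨0, 0, le_rfl, Nat.zero_le _, rfl⟩,
    Submodule.subset_span ⟨0, 0, by simp, Nat.zero_le _, rfl⟩⟩

/-- The subalgebra of global functions. -/
def Bsub (k n : ℕ) : Subalgebra ℂ (Aq n) :=
  Submodule.toSubalgebra (OU n ⊓ OV k n) (one_mem_B k n) (by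
    intro x y hx hy
    exact ⟨span_mul_mem n (fun l _ => 0 ≤ l) (fun l m i j h1 h2 => by omega) x y hx.1 hy.1,
      span_mul_mem n (fun l i => l ≤ k * i) (fun l m i j h1 h2 => by push_cast; linarith)
        x y hx.2 hy.2⟩)

lemma mem_Bsub (k n : ℕ) (x : Aq n) : x ∈ Bsub k n ↔ x ∈ OU n ⊓ OV k n := Iff.rfl

lemma rho_global (k n : ℕ) (f : Aq n) (hf : f ∈ OU n ⊓ OV k n) :
    rho n f = c00 n f • (1 : Lz) := by
  have key : ∀ l : ℤ, coeffL l (rho n f) = coeffL l (c00 n f • (1 : Lz)) := by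
    intro l
    rw [map_smul, ← LaurentPolynomial.T_zero, coeffL_T]
    rcases lt_trichotomy l 0 with h | h | h
    · rw [if_neg (by omega), smul_zero]
      refine mem_span_rho n _ l ?_ f hf.1
      rintro x ⟨m, i, h1, h2, rfl⟩
      rw [rho_monA]
      split_ifs
      · rw [coeffL_T, if_neg (by omega)]
      · exact map_zero _
    · subst h
      rw [c00_eq]; simp
    · rw [if_neg (by omega), smul_zero]
      refine mem_span_rho n _ l ?_ f hf.2
      rintro x ⟨m, i, h1, h2, rfl⟩
      rw [rho_monA]
      split_ifs with hi
      · subst hi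
        rw [coeffL_T, if_neg (by simp at h1; omega)]
      · exact map_zero _
  apply (AddMonoidAlgebra.coeffLinearEquiv ℂ).injective
  ext l
  exact key l

lemma nilp (n : ℕ) (f : Aq n) (hf : rho n f = 0) : f ^ (n + 1) = 0 := by
  obtain ⟨p, rfl⟩ := Ideal.Quotient.mk_surjective f
  have h : PowerSeries.constantCoeff (R := Lz) p = 0 := hf
  rw [← map_pow, Ideal.Quotient.eq_zero_iff_mem, In, Ideal.mem_span_singleton]
  exact pow_dvd_pow_of_dvd (PowerSeries.X_dvd_iff.mpr h) _

lemma unit_B (k n : ℕ) (f : Aq n) (hf : f ∈ OU n ⊓ OV k n) (hc : c00 n f ≠ 0) :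
    ∃ g ∈ OU n ⊓ OV k n, f * g = 1 := by
  set c := c00 n f with hcdef
  let F : Bsub k n := ⟨f, hf⟩
  let N : Bsub k n := F - c • 1
  have hN : IsNilpotent N := by
    refine ⟨n + 1, Subtype.ext ?_⟩
    change (f - c • (1 : Aq n)) ^ (n + 1) = 0
    apply nilp
    rw [map_sub, rho_smul, map_one, rho_global k n f hf, sub_self]
  have hu : IsUnit (c • (1 : Bsub k n)) := by
    refine IsUnit.of_mul_eq_one (c⁻¹ • 1) ?_
    rw [smul_mul_smul_comm, mul_inv_cancel₀ hc, one_smul, one_mul]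
  have hF : IsUnit F := by
    have := hN.isUnit_add_left_of_commute hu (Commute.all _ _)
    simpa [N] using this
  obtain ⟨G, hG⟩ := hF.exists_right_inv
  exact ⟨G.1, G.2, congrArg Subtype.val hG⟩

/-- a global function `f ∈ O_U ∩ O_V` is a unit of `A` if and only if its
coefficient of `z^0 u^0` is nonzero, and in that case its inverse again lies in `O_U ∩ O_V`. -/
theorem statement6 (k n : ℕ) (hk : 1 ≤ k) (hn : 1 ≤ n) (f : Aq n)
    (hf : f ∈ OU n ⊓ OV k n) :
    (IsUnit f ↔ c00 n f ≠ 0) ∧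
    (∀ g : Aq n, f * g = 1 → g ∈ OU n ⊓ OV k n) := by
  have h1 : IsUnit f → c00 n f ≠ 0 := by
    intro hu hc
    have h := hu.map (rho n)
    rw [rho_global k n f hf, hc, zero_smul] at h
    exact not_isUnit_zero h
  refine ⟨⟨h1, fun hc => ?_⟩, fun g hg => ?_⟩
  · obtain ⟨g, -, hg⟩ := unit_B k n f hf hc
    exact IsUnit.of_mul_eq_one g hg
  · obtain ⟨g', hB, hg'⟩ := unit_B k n f hf (h1 (IsUnit.of_mul_eq_one g hg))
    have : g = g' := by
      calc g = g * (f * g') := by rw [hg', mul_one]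
        _ = (f * g) * g' := by ring
        _ = g' := by rw [hg, one_mul]
    rw [this]
    exact hB
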